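/- Let u ∈ N(f) \ {0} and let P ∈ cl(𝒫_u^+) satisfy B_u(P) = B̄(u). Then B(P,ℰ) ≥ B̄(u), and equality B(P,ℰ) = B̄(u) holds if and only if P − Π_P = λ·u for some λ > 0. -/

import Mathlib

/-!
One computes `B(Π_P, P_θ) = H(Π_P) - 𝓛(P_θ, θ)`, where `𝓛` is the Lagrangian of the problem
defining `Π_P`. By Sion's minimax theorem some `𝓛(·, θ)` exceeds `H(Π_P) - ε` on the whole simplex,
so `B(Π_P, P_θ)` gets arbitrarily small, and the Pythagorean identity
`B(P, P_θ) = H(P) - H(Π_P) + B(Π_P, P_θ)` gives `B(P, ℰ) = H(P) - H(Π_P)`. Since `u ∈ N(f)`, the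
line through `P` in direction `u` lies in the fibre of `μ` through `P`, whence `B_u(P) ≤ B(P, ℰ)`
with equality exactly when `Π_P = Π_u(P)`, by strict convexity.

For the sign of `λ`: along the line through `Q ∈ 𝒫_u^+` the convex function `H` attains its minimum
behind `Q`, so `H(Q) ≤ H(Q + v)` for every feasible nonnegative multiple `v` of `u`. This survives
passage to the closure, so if `B_u(P) > 0` then `Π_u(P)` lies strictly behind `P`. The value
`B_u(P) = B̄(u)` is positive because `B_u > 0` on the nonempty set `𝒫_u^+`.
-/

open Set Filter Topology Matrix

theorem strictConvexOn_Ici_of_Ioi {a : ℝ} {g : ℝ → ℝ} (hgc : ContinuousOn g (Ici a))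
    (hg : StrictConvexOn ℝ (Ioi a) g) (hgd : ∀ x ∈ Ioi a, DifferentiableAt ℝ g x) :
    StrictConvexOn ℝ (Ici a) g := by
  refine StrictMonoOn.strictConvexOn_of_deriv (convex_Ici a) hgc ?_
  rw [interior_Ici]
  exact hg.strictMonoOn_deriv hgd

theorem add_deriv_mul_sub_le_of_convexOn {S : Set ℝ} {g : ℝ → ℝ} {g' x y : ℝ}
    (hg : ConvexOn ℝ S g) (hx : x ∈ S) (hy : y ∈ S) (hg' : HasDerivAt g g' x) :
    g x + g' * (y - x) ≤ g y := by
  rcases lt_trichotomy y x with hyx | rfl | hxy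
  · have hslope := hg.slope_le_of_hasDerivAt hy hx hyx hg'
    rw [slope_def_field, div_le_iff₀ (sub_pos.2 hyx)] at hslope
    linarith
  · simp
  · have hslope := hg.le_slope_of_hasDerivAt hx hy hxy hg'
    rw [slope_def_field, le_div_iff₀ (sub_pos.2 hxy)] at hslope
    linarith

theorem strictConvexOn_pi_sum {Z : Type*} [Fintype Z] {s : Z → Set ℝ} {β : Z → ℝ → ℝ}
    (hβ : ∀ z, StrictConvexOn ℝ (s z) (β z)) :
    StrictConvexOn ℝ (univ.pi s) fun Q => ∑ z, β z (Q z) := by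
  refine ⟨convex_pi fun z _ => (hβ z).1, fun Q hQ R hR hQR a b ha hb hab => ?_⟩
  obtain ⟨z₀, hz₀⟩ := Function.ne_iff.1 hQR
  simp only [smul_eq_mul, Finset.mul_sum, ← Finset.sum_add_distrib]
  exact Finset.sum_lt_sum
    (fun z _ => (hβ z).convexOn.2 (hQ z trivial) (hR z trivial) ha.le hb.le hab)
    ⟨z₀, Finset.mem_univ z₀, (hβ z₀).2 (hQ z₀ trivial) (hR z₀ trivial) hz₀ ha hb hab⟩

theorem add_smul_mem_segment_add_smul {V : Type*} [AddCommGroup V] [Module ℝ V] (x u : V)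
    {a b c : ℝ} (hab : a ≤ b) (hbc : b ≤ c) :
    x + b • u ∈ segment ℝ (x + a • u) (x + c • u) := by
  have hb : b ∈ segment ℝ a c := segment_eq_Icc (hab.trans hbc) ▸ ⟨hab, hbc⟩
  have himage := mem_image_of_mem (AffineMap.lineMap x (x + u)) hb
  rw [image_segment] at himage
  simpa only [AffineMap.lineMap_apply_module', add_sub_cancel_left, add_comm] using himage

theorem bddAbove_image_sub_comp {X : Type*} [TopologicalSpace X] {K : Set X} {g : X → ℝ}
    {π : X → X} (hK : IsCompact K) (hg : ContinuousOn g K) (hπ : MapsTo π K K) :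
    BddAbove ((fun x => g x - g (π x)) '' K) := by
  obtain ⟨M, hM⟩ := hK.bddAbove_image hg
  obtain ⟨m, hm⟩ := hK.bddBelow_image hg
  refine ⟨M - m, ?_⟩
  rintro _ ⟨x, hx, rfl⟩
  exact sub_le_sub (hM (mem_image_of_mem g hx)) (hm (mem_image_of_mem g (hπ hx)))

section LagrangeDuality

variable {V ι : Type*} [AddCommGroup V] [Module ℝ V] [TopologicalSpace V] [Fintype ι]
  {K : Set V} {H : V → ℝ} {x y : V}

/-- The Lagrangian of the problem of minimizing `H` on the fibre `{y | L y = L x}`. -/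
def lagrangian (H : V → ℝ) (L : V →L[ℝ] ι → ℝ) (x y : V) (θ : ι → ℝ) : ℝ :=
  H y + θ ⬝ᵥ (L x - L y)

theorem exists_lt_lagrangian {L : V →L[ℝ] ι → ℝ} (hmin : IsMinOn H {y ∈ K | L y = L x} x)
    {t : ℝ} (ht : t < H x) (hy : y ∈ K) : ∃ θ, t < lagrangian H L x y θ := by
  by_cases hxy : L y = L x
  · exact ⟨0, by simpa [lagrangian] using ht.trans_le (hmin ⟨hy, hxy⟩)⟩
  · set v := L x - L y with hv
    have hvv : v ⬝ᵥ v ≠ 0 := fun h => hxy (sub_eq_zero.1 (dotProduct_self_eq_zero.1 h)).symm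
    refine ⟨((t - H y + 1) / (v ⬝ᵥ v)) • v, ?_⟩
    rw [lagrangian, ← hv, smul_dotProduct, smul_eq_mul, div_mul_cancel₀ _ hvv]
    linarith

theorem continuousOn_lagrangian (hHc : ContinuousOn H K) (L : V →L[ℝ] ι → ℝ) (x : V) (θ : ι → ℝ) :
    ContinuousOn (fun y => lagrangian H L x y θ) K :=
  hHc.add (by fun_prop)

theorem convexOn_lagrangian (hH : ConvexOn ℝ K H) (L : V →L[ℝ] ι → ℝ) (x : V) (θ : ι → ℝ) :
    ConvexOn ℝ K fun y => lagrangian H L x y θ := by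
  refine hH.add ⟨hH.1, fun y _ z _ a b _ _ hab => le_of_eq ?_⟩
  obtain rfl : b = 1 - a := by linarith
  simp only [map_add, map_smul, dotProduct_sub, dotProduct_add, dotProduct_smul, smul_eq_mul]
  ring

theorem concaveOn_lagrangian (H : V → ℝ) (L : V →L[ℝ] ι → ℝ) (x y : V) :
    ConcaveOn ℝ univ (lagrangian H L x y) := by
  refine ⟨convex_univ, fun θ _ η _ a b _ _ hab => le_of_eq ?_⟩
  obtain rfl : b = 1 - a := by linarith
  simp only [lagrangian, add_dotProduct, smul_dotProduct, smul_eq_mul]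
  ring

theorem continuous_lagrangian (H : V → ℝ) (L : V →L[ℝ] ι → ℝ) (x y : V) :
    Continuous (lagrangian H L x y) := by
  unfold lagrangian
  fun_prop

theorem exists_forall_mem_lt_lagrangian [IsTopologicalAddGroup V] [ContinuousSMul ℝ V]
    {L : V →L[ℝ] ι → ℝ} (hK : IsCompact K) (hHc : ContinuousOn H K) (hH : ConvexOn ℝ K H)
    (hx : x ∈ K) (hmin : IsMinOn H {y ∈ K | L y = L x} x) {t : ℝ} (ht : t < H x) :
    ∃ θ, ∀ y ∈ K, t < lagrangian H L x y θ := by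
  choose! θ hθ using fun y (hy : y ∈ K) => exists_lt_lagrangian hmin ht hy
  obtain ⟨F, -, hKF⟩ := hK.elim_nhdsWithin_subcover (fun y => {z | t < lagrangian H L x z (θ y)})
    fun y hy => (continuousOn_lagrangian hHc L x (θ y) y hy).eventually_const_lt (hθ y hy)
  have hfinite : ∀ y ∈ K, ∃ η ∈ θ '' F, t < lagrangian H L x y η := fun y hy => by
    simpa using hKF hy
  obtain ⟨η, -, hη⟩ := Sion.exists_lt_iInf_of_lt_iInf_of_finite ⟨x, hx⟩ hK
    (fun η _ => (continuousOn_lagrangian hHc L x η).lowerSemicontinuousOn)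
    (fun η _ => (convexOn_lagrangian hH L x η).quasiconvexOn) convex_univ
    (fun y _ => (continuous_lagrangian H L x y).continuousOn.upperSemicontinuousOn)
    (fun y _ => (concaveOn_lagrangian H L x y).quasiconcaveOn) hH.1
    (F.finite_toSet.image θ) (subset_univ _) hfinite
  exact ⟨η, hη⟩

end LagrangeDuality

section BregmanFamily

variable {Z ι : Type*} [Fintype Z] {β β' : Z → ℝ → ℝ} {P Q R : Z → ℝ}

/-- The separable convex functional `H`, a generalized negative entropy. -/
def entropy (β : Z → ℝ → ℝ) (Q : Z → ℝ) : ℝ :=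
  ∑ z, β z (Q z)

/-- The Bregman divergence `B(P, Q)` of `entropy β`, where `β' z` plays the role of the derivative
of `β z`. -/
def bregmanDiv (β β' : Z → ℝ → ℝ) (P Q : Z → ℝ) : ℝ :=
  ∑ z, (β z (P z) - β z (Q z) - β' z (Q z) * (P z - Q z))

/-- The probability vectors with the same mean `μ` as `P`. -/
def momentFiber (A : Matrix Z ι ℝ) (P : Z → ℝ) : Set (Z → ℝ) :=
  {Q ∈ stdSimplex ℝ Z | Q ᵥ* A = P ᵥ* A}

theorem convex_momentFiber (A : Matrix Z ι ℝ) (P : Z → ℝ) : Convex ℝ (momentFiber A P) :=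
  (convex_stdSimplex ℝ Z).inter ((convex_singleton (P ᵥ* A)).linear_preimage A.vecMulLinear)

theorem continuousOn_entropy (hβc : ∀ z, ContinuousOn (β z) (Ici 0)) :
    ContinuousOn (entropy β) (stdSimplex ℝ Z) :=
  continuousOn_finsetSum _ fun z _ =>
    (hβc z).comp (continuous_apply z).continuousOn fun _ hQ => hQ.1 z

theorem convexOn_entropy (hβ : ∀ z, ConvexOn ℝ (Ici 0) (β z)) :
    ConvexOn ℝ (stdSimplex ℝ Z) (entropy β) := by
  refine ⟨convex_stdSimplex ℝ Z, fun Q hQ R hR a b ha hb hab => ?_⟩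
  simp only [entropy, smul_eq_mul, Finset.mul_sum, ← Finset.sum_add_distrib]
  exact Finset.sum_le_sum fun z _ => (hβ z).2 (hQ.1 z) (hR.1 z) ha hb hab

theorem strictConvexOn_entropy (hβ : ∀ z, StrictConvexOn ℝ (Ici 0) (β z)) :
    StrictConvexOn ℝ (stdSimplex ℝ Z) (entropy β) :=
  (strictConvexOn_pi_sum hβ).subset (fun _ hQ z _ => hQ.1 z) (convex_stdSimplex ℝ Z)

theorem bregmanDiv_nonneg (hβ : ∀ z, ConvexOn ℝ (Ici 0) (β z))
    (hβd : ∀ z x, 0 < x → HasDerivAt (β z) (β' z x) x) (hP : ∀ z, 0 ≤ P z) (hQ : ∀ z, 0 < Q z) :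
    0 ≤ bregmanDiv β β' P Q :=
  Finset.sum_nonneg fun z _ => by
    linarith [add_deriv_mul_sub_le_of_convexOn (hβ z) (hQ z).le (hP z) (hβd z (Q z) (hQ z))]

variable [Fintype ι] {A : Matrix Z ι ℝ} {p : (ι → ℝ) → Z → ℝ}

/-- `p` is the Bregman family `θ ↦ P_θ` of the statistic `z ↦ A z`, whose mean `μ P` is the vector
`P ᵥ* A`. The inverses `e z` of `β' z` do not appear: `P_θ` is characterized by its image under
the `β' z`, with `r` standing for `Λ θ`. -/
structure IsBregmanFamily (β' : Z → ℝ → ℝ) (A : Matrix Z ι ℝ) (p : (ι → ℝ) → Z → ℝ) : Prop where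
  pos : ∀ θ z, 0 < p θ z
  sum_eq_one : ∀ θ, ∑ z, p θ z = 1
  exists_deriv_eq : ∀ θ, ∃ r, ∀ z, β' z (p θ z) = θ ⬝ᵥ A z - r

namespace IsBregmanFamily

theorem mem_stdSimplex (hp : IsBregmanFamily β' A p) (θ : ι → ℝ) : p θ ∈ stdSimplex ℝ Z :=
  ⟨fun z => (hp.pos θ z).le, hp.sum_eq_one θ⟩

theorem bregmanDiv_eq (hp : IsBregmanFamily β' A p) (β : Z → ℝ → ℝ) (hP : ∑ z, P z = 1)
    (θ : ι → ℝ) :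
    bregmanDiv β β' P (p θ) =
      entropy β P - lagrangian (entropy β) A.vecMulLinear.toContinuousLinearMap P (p θ) θ := by
  obtain ⟨r, hr⟩ := hp.exists_deriv_eq θ
  have hlinear : ∑ z, β' z (p θ z) * (P z - p θ z) = θ ⬝ᵥ (P ᵥ* A - p θ ᵥ* A) := by
    calc ∑ z, β' z (p θ z) * (P z - p θ z)
        = ∑ z, (P - p θ) z * (A *ᵥ θ) z - r * (∑ z, P z - ∑ z, p θ z) := by
          rw [← Finset.sum_sub_distrib, Finset.mul_sum, ← Finset.sum_sub_distrib]
          refine Finset.sum_congr rfl fun z _ => ?_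
          rw [hr, dotProduct_comm]
          simp only [Pi.sub_apply, mulVec]
          ring
      _ = (P - p θ) ⬝ᵥ A *ᵥ θ := by
          rw [hP, hp.sum_eq_one, sub_self, mul_zero, sub_zero, dotProduct]
      _ = θ ⬝ᵥ (P ᵥ* A - p θ ᵥ* A) := by rw [dotProduct_mulVec, sub_vecMul, dotProduct_comm]
  simp only [bregmanDiv, Finset.sum_sub_distrib, hlinear, entropy, lagrangian,
    LinearMap.coe_toContinuousLinearMap', vecMulLinear_apply]
  ring

theorem bregmanDiv_pythagoras (hp : IsBregmanFamily β' A p) (β : Z → ℝ → ℝ) (hP : ∑ z, P z = 1)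
    (hR : R ∈ momentFiber A P) (θ : ι → ℝ) :
    bregmanDiv β β' P (p θ) = entropy β P - entropy β R + bregmanDiv β β' R (p θ) := by
  rw [hp.bregmanDiv_eq β hP, hp.bregmanDiv_eq β hR.1.2]
  simp only [lagrangian, LinearMap.coe_toContinuousLinearMap', vecMulLinear_apply, hR.2]
  ring

theorem exists_bregmanDiv_lt (hp : IsBregmanFamily β' A p)
    (hβc : ∀ z, ContinuousOn (β z) (Ici 0)) (hβ : ∀ z, ConvexOn ℝ (Ici 0) (β z))
    (hR : R ∈ stdSimplex ℝ Z) (hRmin : IsMinOn (entropy β) (momentFiber A R) R)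
    {ε : ℝ} (hε : 0 < ε) : ∃ θ, bregmanDiv β β' R (p θ) < ε := by
  obtain ⟨θ, hθ⟩ := exists_forall_mem_lt_lagrangian
    (L := A.vecMulLinear.toContinuousLinearMap) (isCompact_stdSimplex ℝ Z)
    (continuousOn_entropy hβc) (convexOn_entropy hβ) hR hRmin (sub_lt_self (entropy β R) hε)
  refine ⟨θ, ?_⟩
  rw [hp.bregmanDiv_eq β hR.2]
  linarith [hθ (p θ) (hp.mem_stdSimplex θ)]

theorem iInf_bregmanDiv_eq (hp : IsBregmanFamily β' A p)
    (hβc : ∀ z, ContinuousOn (β z) (Ici 0)) (hβ : ∀ z, ConvexOn ℝ (Ici 0) (β z))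
    (hβd : ∀ z x, 0 < x → HasDerivAt (β z) (β' z x) x) (hP : ∑ z, P z = 1)
    (hR : R ∈ momentFiber A P) (hRmin : IsMinOn (entropy β) (momentFiber A P) R) :
    ⨅ θ, bregmanDiv β β' P (p θ) = entropy β P - entropy β R := by
  have hRmin' : IsMinOn (entropy β) (momentFiber A R) R := by
    simpa only [momentFiber, hR.2] using hRmin
  refine ciInf_eq_of_forall_ge_of_forall_gt_exists_lt (fun θ => ?_) fun w hw => ?_
  · rw [hp.bregmanDiv_pythagoras β hP hR]
    exact le_add_of_nonneg_right (bregmanDiv_nonneg hβ hβd hR.1.1 (hp.pos θ))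
  · obtain ⟨θ, hθ⟩ := hp.exists_bregmanDiv_lt hβc hβ hR.1 hRmin' (sub_pos.2 hw)
    refine ⟨θ, ?_⟩
    rw [hp.bregmanDiv_pythagoras β hP hR]
    linarith

end IsBregmanFamily

end BregmanFamily

section Lines

variable {Z ι : Type*} [Fintype Z] {H : (Z → ℝ) → ℝ} {u P Q : Z → ℝ} {π : (Z → ℝ) → Z → ℝ}

/-- The chord of the simplex through `Q` in direction `u`. -/
def simplexLine (u Q : Z → ℝ) : Set (Z → ℝ) :=
  {R ∈ stdSimplex ℝ Z | ∃ t : ℝ, R - Q = t • u}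

/-- `π` is a version of the projection `Π_u` onto the minimizers of `H` on lines in direction
`u`; its values outside the simplex are irrelevant. -/
def IsLineProjection (H : (Z → ℝ) → ℝ) (u : Z → ℝ) (π : (Z → ℝ) → Z → ℝ) : Prop :=
  ∀ Q ∈ stdSimplex ℝ Z, π Q ∈ simplexLine u Q ∧ IsMinOn H (simplexLine u Q) (π Q)

/-- The set `𝒫_u^+` of those `Q` that lie strictly ahead of `π Q` in direction `u`. -/
def positiveSide (u : Z → ℝ) (π : (Z → ℝ) → Z → ℝ) : Set (Z → ℝ) :=
  {Q ∈ stdSimplex ℝ Z | 0 < (Q - π Q) ⬝ᵥ u}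

theorem self_mem_simplexLine (u : Z → ℝ) (hQ : Q ∈ stdSimplex ℝ Z) : Q ∈ simplexLine u Q :=
  ⟨hQ, 0, by simp⟩

theorem convex_simplexLine (u Q : Z → ℝ) : Convex ℝ (simplexLine u Q) := by
  rintro R ⟨hR, s, hs⟩ S ⟨hS, t, ht⟩ a b ha hb hab
  refine ⟨convex_stdSimplex ℝ Z hR hS ha hb hab, a * s + b * t, ?_⟩
  obtain rfl : b = 1 - a := by linarith
  calc a • R + (1 - a) • S - Q = a • (R - Q) + (1 - a) • (S - Q) := by module
    _ = (a * s + (1 - a) * t) • u := by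
        rw [hs, ht]
        module

theorem simplexLine_subset_momentFiber {A : Matrix Z ι ℝ} (hu : u ᵥ* A = 0) (P : Z → ℝ) :
    simplexLine u P ⊆ momentFiber A P := by
  rintro Q ⟨hQ, t, ht⟩
  refine ⟨hQ, ?_⟩
  rw [← sub_eq_zero, ← sub_vecMul, ht, smul_vecMul, hu, smul_zero]

theorem closure_positiveSide_subset (u : Z → ℝ) (π : (Z → ℝ) → Z → ℝ) :
    closure (positiveSide u π) ⊆ stdSimplex ℝ Z :=
  closure_minimal (fun _ hQ => hQ.1) (isClosed_stdSimplex ℝ Z)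

theorem exists_neg_of_mem_positiveSide (hπ : IsLineProjection H u π) (hQ : Q ∈ positiveSide u π) :
    ∃ s < (0 : ℝ), π Q = Q + s • u := by
  obtain ⟨⟨-, s, hs⟩, -⟩ := hπ Q hQ.1
  refine ⟨s, ?_, by rw [← hs, add_sub_cancel]⟩
  have hpos : 0 < -s * (u ⬝ᵥ u) := by
    simpa only [← neg_sub (π Q), hs, neg_dotProduct, smul_dotProduct, smul_eq_mul, neg_mul]
      using hQ.2
  exact neg_pos.1 (pos_of_mul_pos_left hpos (Finset.sum_nonneg fun z _ => mul_self_nonneg (u z)))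

theorem le_add_smul_of_mem_positiveSide (hH : ConvexOn ℝ (stdSimplex ℝ Z) H)
    (hπ : IsLineProjection H u π) (hQ : Q ∈ positiveSide u π) {c : ℝ} (hc : 0 ≤ c)
    (hQc : Q + c • u ∈ stdSimplex ℝ Z) : H Q ≤ H (Q + c • u) := by
  obtain ⟨s, hs, hπQ⟩ := exists_neg_of_mem_positiveSide hπ hQ
  obtain ⟨hπmem, hπmin⟩ := hπ Q hQ.1
  have hπc : H (π Q) ≤ H (Q + c • u) := hπmin ⟨hQc, c, add_sub_cancel_left Q (c • u)⟩
  have hbetween : Q ∈ segment ℝ (π Q) (Q + c • u) := by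
    simpa [hπQ] using add_smul_mem_segment_add_smul Q u hs.le hc
  exact (hH.le_max_of_mem_segment hπmem.1 hQc hbetween).trans_eq (max_eq_right hπc)

theorem eventually_add_smul_mem_stdSimplex {v : Z → ℝ} (hP : P ∈ stdSimplex ℝ Z)
    (hPv : P + v ∈ stdSimplex ℝ Z) {c : ℝ} (hc : 0 ≤ c) (hc1 : c < 1) :
    ∀ᶠ Q in 𝓝[stdSimplex ℝ Z] P, Q + c • v ∈ stdSimplex ℝ Z := by
  have hv : ∑ z, v z = 0 := by
    simpa [Finset.sum_add_distrib, hP.2] using hPv.2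
  have hnonneg (z) : ∀ᶠ Q in 𝓝[stdSimplex ℝ Z] P, 0 ≤ (Q + c • v) z := by
    rcases le_or_gt 0 (v z) with hvz | hvz
    · filter_upwards [self_mem_nhdsWithin] with Q hQ
      exact add_nonneg (hQ.1 z) (mul_nonneg hc hvz)
    · have hpos : 0 < (P + c • v) z := by
        have hPvz : 0 ≤ P z + v z := hPv.1 z
        simp only [Pi.add_apply, Pi.smul_apply, smul_eq_mul]
        nlinarith
      have hcont : Continuous fun Q : Z → ℝ => (Q + c • v) z := by fun_prop
      exact (hcont.continuousWithinAt.eventually_const_lt hpos).mono fun _ => le_of_lt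
  filter_upwards [eventually_all.2 hnonneg, self_mem_nhdsWithin] with Q hQv hQ
  refine ⟨hQv, ?_⟩
  simp [Finset.sum_add_distrib, ← Finset.mul_sum, hv, hQ.2]

theorem le_add_smul_smul_of_mem_closure_positiveSide (hHc : ContinuousOn H (stdSimplex ℝ Z))
    (hH : ConvexOn ℝ (stdSimplex ℝ Z) H) (hπ : IsLineProjection H u π)
    (hP : P ∈ closure (positiveSide u π)) {c : ℝ} (hc : 0 ≤ c)
    (hPc : P + c • u ∈ stdSimplex ℝ Z) {r : ℝ} (hr : 0 ≤ r) (hr1 : r < 1) :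
    H P ≤ H (P + r • c • u) := by
  have hPmem := closure_positiveSide_subset u π hP
  have hstep := eventually_add_smul_mem_stdSimplex hPmem hPc hr hr1
  have hfilter : 𝓝[positiveSide u π] P ≤ 𝓝[stdSimplex ℝ Z] P := nhdsWithin_mono _ fun _ hQ => hQ.1
  have hlim : Tendsto (fun Q => H (Q + r • c • u)) (𝓝[stdSimplex ℝ Z] P)
      (𝓝 (H (P + r • c • u))) :=
    (hHc _ (hstep.self_of_nhdsWithin hPmem)).tendsto.comp (tendsto_nhdsWithin_iff.2
      ⟨Continuous.continuousWithinAt (by fun_prop), hstep⟩)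
  have : (𝓝[positiveSide u π] P).NeBot := mem_closure_iff_nhdsWithin_neBot.1 hP
  refine le_of_tendsto_of_tendsto ((hHc P hPmem).mono_left hfilter) (hlim.mono_left hfilter) ?_
  filter_upwards [hstep.filter_mono hfilter, self_mem_nhdsWithin] with Q hQc hQ
  rw [smul_smul] at hQc ⊢
  exact le_add_smul_of_mem_positiveSide hH hπ hQ (mul_nonneg hr hc) hQc

-- At points near `P` the full step may leave the simplex, so the limit is taken along the half
-- step, and convexity recovers the full one.
theorem le_add_smul_of_mem_closure_positiveSide (hHc : ContinuousOn H (stdSimplex ℝ Z))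
    (hH : ConvexOn ℝ (stdSimplex ℝ Z) H) (hπ : IsLineProjection H u π)
    (hP : P ∈ closure (positiveSide u π)) {c : ℝ} (hc : 0 ≤ c)
    (hPc : P + c • u ∈ stdSimplex ℝ Z) : H P ≤ H (P + c • u) := by
  have hhalf := le_add_smul_smul_of_mem_closure_positiveSide hHc hH hπ hP hc hPc
    (r := 2⁻¹) (by norm_num) (by norm_num)
  have hmidpoint : P + (2⁻¹ : ℝ) • c • u = (2⁻¹ : ℝ) • P + (2⁻¹ : ℝ) • (P + c • u) := by
    module
  have hconvex := hH.2 (closure_positiveSide_subset u π hP) hPc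
    (by norm_num : (0 : ℝ) ≤ 2⁻¹) (by norm_num : (0 : ℝ) ≤ 2⁻¹) (by norm_num)
  rw [← hmidpoint, smul_eq_mul, smul_eq_mul] at hconvex
  linarith

theorem exists_pos_sub_eq_smul_of_lt (hHc : ContinuousOn H (stdSimplex ℝ Z))
    (hH : ConvexOn ℝ (stdSimplex ℝ Z) H) (hπ : IsLineProjection H u π)
    (hP : P ∈ closure (positiveSide u π)) (hlt : H (π P) < H P) :
    ∃ l : ℝ, 0 < l ∧ P - π P = l • u := by
  obtain ⟨⟨hπP, t, ht⟩, -⟩ := hπ P (closure_positiveSide_subset u π hP)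
  refine ⟨-t, ?_, by rw [neg_smul, ← ht, neg_sub]⟩
  by_contra! htn
  have hπt : P + t • u = π P := by rw [← ht, add_sub_cancel]
  have hle := le_add_smul_of_mem_closure_positiveSide hHc hH hπ hP (c := t)
    (by linarith) (hπt ▸ hπP)
  rw [hπt] at hle
  exact hlt.not_ge hle

theorem lt_of_mem_positiveSide (hH : StrictConvexOn ℝ (stdSimplex ℝ Z) H)
    (hπ : IsLineProjection H u π) (hQ : Q ∈ positiveSide u π) : H (π Q) < H Q := by
  obtain ⟨hπmem, hπmin⟩ := hπ Q hQ.1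
  by_contra! hle
  have hQmin : IsMinOn H (simplexLine u Q) Q := fun R hR => hle.trans (hπmin hR)
  have hQπ : Q = π Q := (hH.subset (fun _ hR => hR.1) (convex_simplexLine u Q)).eq_of_isMinOn
    hQmin hπmin (self_mem_simplexLine u hQ.1) hπmem
  simpa [← hQπ] using hQ.2

theorem lt_of_eq_sSup_closure_positiveSide (hHc : ContinuousOn H (stdSimplex ℝ Z))
    (hH : StrictConvexOn ℝ (stdSimplex ℝ Z) H) (hπ : IsLineProjection H u π)
    (hP : P ∈ closure (positiveSide u π))
    (hmax : H P - H (π P) = sSup ((fun Q => H Q - H (π Q)) '' closure (positiveSide u π))) :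
    H (π P) < H P := by
  obtain ⟨Q, hQ⟩ := closure_nonempty_iff.1 ⟨P, hP⟩
  have hbdd := (bddAbove_image_sub_comp (isCompact_stdSimplex ℝ Z) hHc fun R hR =>
    (hπ R hR).1.1).mono (image_mono (closure_positiveSide_subset u π))
  have hle : H Q - H (π Q) ≤ H P - H (π P) :=
    hmax ▸ le_csSup hbdd (mem_image_of_mem _ (subset_closure hQ))
  linarith [lt_of_mem_positiveSide hH hπ hQ]

end Lines

theorem stmt_15_general {Z ι : Type*} [Fintype Z] [Fintype ι] {β β' : Z → ℝ → ℝ}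
    (hβc : ∀ z, ContinuousOn (β z) (Ici 0)) (hβsc : ∀ z, StrictConvexOn ℝ (Ioi 0) (β z))
    (hβd : ∀ z x, 0 < x → HasDerivAt (β z) (β' z x) x)
    {A : Matrix Z ι ℝ} {p : (ι → ℝ) → Z → ℝ} (hp : IsBregmanFamily β' A p)
    {u : Z → ℝ} (hu : u ᵥ* A = 0)
    {π : (Z → ℝ) → Z → ℝ} (hπ : IsLineProjection (entropy β) u π)
    {P R : Z → ℝ} (hP : P ∈ closure (positiveSide u π)) (hlt : entropy β (π P) < entropy β P)
    (hR : R ∈ momentFiber A P) (hRmin : IsMinOn (entropy β) (momentFiber A P) R) :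
    entropy β P - entropy β (π P) ≤ ⨅ θ, bregmanDiv β β' P (p θ) ∧
      (⨅ θ, bregmanDiv β β' P (p θ) = entropy β P - entropy β (π P) ↔
        ∃ l : ℝ, 0 < l ∧ P - R = l • u) := by
  have hPmem := closure_positiveSide_subset u π hP
  have hβ z := strictConvexOn_Ici_of_Ioi (hβc z) (hβsc z) fun x hx => (hβd z x hx).differentiableAt
  have hH := strictConvexOn_entropy hβ
  obtain ⟨hπmem, hπmin⟩ := hπ P hPmem
  have hπfiber := simplexLine_subset_momentFiber hu P hπmem
  have hRπ : entropy β R ≤ entropy β (π P) := hRmin hπfiber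
  rw [hp.iInf_bregmanDiv_eq hβc (fun z => (hβ z).convexOn) hβd hPmem.2 hR hRmin]
  refine ⟨by linarith, fun heq => ?_, fun ⟨l, _, hl⟩ => ?_⟩
  · have hπRmin : IsMinOn (entropy β) (momentFiber A P) (π P) := fun Q hQ =>
      (sub_right_injective heq).ge.trans (hRmin hQ)
    obtain rfl : π P = R := (hH.subset (fun _ hQ => hQ.1) (convex_momentFiber A P)).eq_of_isMinOn
      hπRmin hRmin hπfiber hR
    exact exists_pos_sub_eq_smul_of_lt (continuousOn_entropy hβc) hH.convexOn hπ hP hlt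
  · have hRline : R ∈ simplexLine u P := ⟨hR.1, -l, by rw [neg_smul, ← hl, neg_sub]⟩
    rw [le_antisymm hRπ (hπmin hRline)]

theorem stmt_15 {Z : Type} [Fintype Z] [Nonempty Z] {d : ℕ}
    (β β' : Z → ℝ → ℝ)
    (hβc : ∀ z, ContinuousOn (β z) (Set.Ici 0))
    (hβsc : ∀ z, StrictConvexOn ℝ (Set.Ioi 0) (β z))
    (hβd : ∀ z x, 0 < x → HasDerivAt (β z) (β' z x) x)
    (hβ'bot : ∀ z, Filter.Tendsto (β' z) (nhdsWithin 0 (Set.Ioi 0)) Filter.atBot)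
    (hβ'top : ∀ z, Filter.Tendsto (β' z) Filter.atTop Filter.atTop)
    (e : Z → ℝ → ℝ)
    (he_pos : ∀ z r, 0 < e z r)
    (he_left : ∀ z r, β' z (e z r) = r)
    (he_right : ∀ z x, 0 < x → e z (β' z x) = x)
    (f : Z → Fin d → ℝ)
    (prob : Set (Z → ℝ))
    (hprob : prob = {P : Z → ℝ | (∀ z, 0 ≤ P z) ∧ (∑ z, P z) = 1})
    (μ : (Z → ℝ) → Fin d → ℝ)
    (hμ : ∀ P i, μ P i = ∑ z, P z * f z i)
    (H : (Z → ℝ) → ℝ)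
    (hH : ∀ Q, H Q = ∑ z, β z (Q z))
    (Λ : (Fin d → ℝ) → ℝ)
    (hΛ : ∀ θ, (∑ z, e z ((∑ i, θ i * f z i) - Λ θ)) = 1)
    (Pθ : (Fin d → ℝ) → Z → ℝ)
    (hPθ : ∀ θ z, Pθ θ z = e z ((∑ i, θ i * f z i) - Λ θ))
    (Bdiv : (Z → ℝ) → (Z → ℝ) → ℝ)
    (hBdiv : ∀ P Q, Bdiv P Q = ∑ z, (β z (P z) - β z (Q z) - β' z (Q z) * (P z - Q z)))
    (BE : (Z → ℝ) → ℝ)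
    (hBE : ∀ P, BE P = ⨅ θ, Bdiv P (Pθ θ))
    (Pr : (Z → ℝ) → Z → ℝ)
    (hPr : ∀ P ∈ prob, Pr P ∈ prob ∧ μ (Pr P) = μ P ∧
      (∀ Q ∈ prob, μ Q = μ P → H (Pr P) ≤ H Q) ∧
      (∀ Q ∈ prob, μ Q = μ P → H Q = H (Pr P) → Q = Pr P))
    (Pru : (Z → ℝ) → (Z → ℝ) → Z → ℝ)
    (hPru : ∀ u : Z → ℝ, (∑ z, u z) = 0 → u ≠ 0 → ∀ Q ∈ prob,
      Pru u Q ∈ prob ∧ (∃ t : ℝ, ∀ z, Pru u Q z - Q z = t * u z) ∧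
      (∀ R ∈ prob, (∃ t : ℝ, ∀ z, R z - Q z = t * u z) → H (Pru u Q) ≤ H R) ∧
      (∀ R ∈ prob, (∃ t : ℝ, ∀ z, R z - Q z = t * u z) → H R = H (Pru u Q) → R = Pru u Q))
    (Pplus : (Z → ℝ) → Set (Z → ℝ))
    (hPplus : ∀ u, Pplus u = {Q | Q ∈ prob ∧ 0 < ∑ z, (Q z - Pru u Q z) * u z})
    (Bu : (Z → ℝ) → (Z → ℝ) → ℝ)
    (hBu : ∀ u Q, Bu u Q = H Q - H (Pru u Q))
    (Bbar : (Z → ℝ) → ℝ)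
    (hBbar : ∀ u, Bbar u = sSup (Bu u '' closure (Pplus u)))
    (N : Set (Z → ℝ))
    (hNdef : N = {w : Z → ℝ | (∑ z, w z) = 0 ∧ ∀ i, (∑ z, w z * f z i) = 0})
    (u : Z → ℝ) (hu : u ∈ N) (hune : u ≠ 0)
    (P : Z → ℝ) (hPcl : P ∈ closure (Pplus u))
    (hPmax : Bu u P = Bbar u) :
    Bbar u ≤ BE P ∧ (BE P = Bbar u ↔ ∃ l : ℝ, 0 < l ∧ P - Pr P = l • u) := by
  obtain rfl : H = entropy β := funext hH
  obtain rfl : Bdiv = bregmanDiv β β' := funext₂ hBdiv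
  obtain rfl : μ = fun Q => Q ᵥ* f := funext₂ hμ
  obtain rfl : prob = stdSimplex ℝ Z := hprob
  obtain ⟨hu_sum, hu_moment⟩ := hNdef ▸ hu
  have hp : IsBregmanFamily β' f Pθ :=
    ⟨fun θ z => hPθ θ z ▸ he_pos z _, fun θ => by simpa only [hPθ] using hΛ θ,
      fun θ => ⟨Λ θ, fun z => by rw [hPθ, he_left, dotProduct]⟩⟩
  have hπ : IsLineProjection (entropy β) u (Pru u) := fun Q hQ => by
    obtain ⟨hmem, ⟨t, ht⟩, hmin, -⟩ := hPru u hu_sum hune Q hQ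
    exact ⟨⟨hmem, t, funext ht⟩, fun R ⟨hR, s, hs⟩ => hmin R hR ⟨s, congrFun hs⟩⟩
  have hPplus_eq : Pplus u = positiveSide u (Pru u) := hPplus u
  have hBu_eq : Bu u = fun Q => entropy β Q - entropy β (Pru u Q) := funext (hBu u)
  rw [hPplus_eq] at hPcl
  rw [hBbar, hPplus_eq, hBu_eq] at hPmax
  obtain ⟨hR, hRμ, hRmin, -⟩ := hPr P (closure_positiveSide_subset u (Pru u) hPcl)
  have hβ z := strictConvexOn_Ici_of_Ioi (hβc z) (hβsc z) fun x hx => (hβd z x hx).differentiableAt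
  have hlt := lt_of_eq_sSup_closure_positiveSide (continuousOn_entropy hβc)
    (strictConvexOn_entropy hβ) hπ hPcl hPmax
  rw [hBbar, hPplus_eq, hBu_eq, ← hPmax, hBE]
  exact stmt_15_general hβc hβsc hβd hp (funext hu_moment) hπ hPcl hlt ⟨hR, hRμ⟩
    fun Q hQ => hRmin Q hQ.1 hQ.2
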